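/- arXiv:1609.00290 — 2 statements merged into one kernel-verified Lean document; each statement's English description precedes it below -/
import Mathlib

section
/- Fix reals k1 > 0, σ > k1, and ρ ∈ (0,1). Set u_min := k1·(1−ρ)/(ρ·(σ−k1·ρ)) and ρ* := 2k1/( k1 + σ + √((σ−k1)·(σ+3k1)) ). Then: (i) the function u ↦ u^{−k1·ρ}·(1−ρ+u·ρ²)^{σ} on (0,∞) attains its unique global minimum at u = u_min; (ii) u_min ≥ 1 if and only if ρ ≤ ρ*. -/
/-- A critical point of `u ↦ u ^ (-a) * (c + u * d) ^ s` with `0 < a < s` is its strict global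
minimum on the positive reals. -/
theorem rpow_neg_mul_affine_rpow_lt {a s c d m u : ℝ} (ha : 0 < a) (has : a < s) (hc : 0 < c)
    (hd : 0 < d) (hm : 0 < m) (hcrit : m * d * s = a * (c + m * d)) (hu : 0 < u) (hum : u ≠ m) :
    m ^ (-a) * (c + m * d) ^ s < u ^ (-a) * (c + u * d) ^ s := by
  have hs : 0 < s := ha.trans has
  have hB : 0 < c + m * d := by positivity
  have hne : u / m - 1 ≠ 0 := fun h => hum ((div_eq_one_iff_eq hm.ne').1 (sub_eq_zero.1 h))
  have ht : 0 < u / m := by positivity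
  have bernoulli : (u / m) ^ (a / s) < 1 + a / s * (u / m - 1) := by
    have h := rpow_one_add_lt_one_add_mul_self (s := u / m - 1) (by linarith) hne
      (div_pos ha hs) ((div_lt_one hs).2 has)
    rwa [add_sub_cancel] at h
  have hratio : 1 + a / s * (u / m - 1) = (c + u * d) / (c + m * d) := by
    have hw : a / s = m * d / (c + m * d) := by
      rw [div_eq_div_iff hs.ne' hB.ne', hcrit]
    rw [hw]
    field_simp
    ring
  rw [hratio] at bernoulli
  have h := Real.rpow_lt_rpow (by positivity) bernoulli hs
  rw [← Real.rpow_mul ht.le, div_mul_cancel₀ a hs.ne', Real.div_rpow hu.le hm.le,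
    Real.div_rpow (by positivity) hB.le,
    div_lt_div_iff₀ (Real.rpow_pos_of_pos hm a) (Real.rpow_pos_of_pos hB s)] at h
  rw [Real.rpow_neg hm.le, Real.rpow_neg hu.le, inv_mul_eq_div, inv_mul_eq_div,
    div_lt_div_iff₀ (Real.rpow_pos_of_pos hm a) (Real.rpow_pos_of_pos hu a)]
  linarith

/-- For `0 < k < σ` and `0 < ρ < 1`, the quadratic `k ρ² - (k + σ) ρ + k` is nonnegative exactly when
`ρ` is at most its smaller root. -/
theorem quadratic_nonneg_iff_le_small_root {k σ ρ : ℝ} (hk : 0 < k) (hσ : k < σ)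
    (hρ0 : 0 < ρ) (hρ1 : ρ < 1) :
    0 ≤ k * ρ ^ 2 - (k + σ) * ρ + k ↔
      ρ ≤ 2 * k / (k + σ + Real.sqrt ((σ - k) * (σ + 3 * k))) := by
  have hdisc : 0 ≤ (σ - k) * (σ + 3 * k) := mul_nonneg (by linarith) (by linarith)
  have hsq := Real.sq_sqrt hdisc
  have hlt : σ - k < Real.sqrt ((σ - k) * (σ + 3 * k)) :=
    Real.lt_sqrt_of_sq_lt (by nlinarith [mul_pos hk (sub_pos.2 hσ)])
  set r := Real.sqrt ((σ - k) * (σ + 3 * k))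
  have hfac : 0 < 2 * k - ρ * (k + σ - r) := by
    nlinarith [mul_pos hρ0 (sub_pos.2 hlt), mul_pos hk (sub_pos.2 hρ1)]
  have hprod : (2 * k - ρ * (k + σ + r)) * (2 * k - ρ * (k + σ - r)) =
      4 * k * (k * ρ ^ 2 - (k + σ) * ρ + k) := by
    linear_combination -ρ ^ 2 * hsq
  rw [le_div_iff₀ (by linarith), ← sub_nonneg (a := 2 * k),
    ← mul_nonneg_iff_of_pos_right (b := 2 * k - ρ * (k + σ + r)) hfac, hprod,
    mul_nonneg_iff_of_pos_left (by positivity)]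

theorem chernoff_exponent_minimizer (k1 σ ρ : ℝ) (hk1 : 0 < k1) (hσ : k1 < σ)
    (hρ : ρ ∈ Set.Ioo (0 : ℝ) 1) :
    (∀ u : ℝ, 0 < u → u ≠ k1 * (1 - ρ) / (ρ * (σ - k1 * ρ)) →
      (k1 * (1 - ρ) / (ρ * (σ - k1 * ρ))) ^ (-(k1 * ρ)) *
          (1 - ρ + (k1 * (1 - ρ) / (ρ * (σ - k1 * ρ))) * ρ ^ 2) ^ σ <
        u ^ (-(k1 * ρ)) * (1 - ρ + u * ρ ^ 2) ^ σ) ∧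
    (1 ≤ k1 * (1 - ρ) / (ρ * (σ - k1 * ρ)) ↔
      ρ ≤ 2 * k1 / (k1 + σ + Real.sqrt ((σ - k1) * (σ + 3 * k1)))) := by
  obtain ⟨hρ0, hρ1⟩ := hρ
  have hlt : k1 * ρ < σ := (mul_lt_of_lt_one_right hk1 hρ1).trans hσ
  have hgap : 0 < σ - k1 * ρ := sub_pos.2 hlt
  have hc : 0 < 1 - ρ := sub_pos.2 hρ1
  constructor
  · intro u hu hne
    refine rpow_neg_mul_affine_rpow_lt (by positivity) hlt hc (by positivity) (by positivity)
      ?_ hu hne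
    field_simp
    ring
  · rw [← quadratic_nonneg_iff_le_small_root hk1 hσ hρ0 hρ1, one_le_div (by positivity),
      ← sub_nonneg]
    ring_nf
end

section
/- Fix an integer k1 ≥ 2 and a real σ > (3/2)·k1. Set ρ* := 2k1/( k1 + σ + √((σ−k1)·(σ+3k1)) ) (so ρ* < 1/2), and define K(ρ,σ) := ρ·log(1/ρ) + (1−ρ)·log(1/(1−ρ)) + σ·log(1−ρ+ρ²) and H(ρ,σ) := ρ·log(1/ρ) + (1−ρ)·log(1/(1−ρ)) + σ·log( σ·(1−ρ)/(σ−k1·ρ) ) − k1·ρ·log( k1·(1−ρ)/(ρ·(σ−k1·ρ)) ). Then for every ρ ∈ [ρ*, 1/2]: K(ρ,σ) ≤ K(ρ*,σ) = H(ρ*,σ) < 0. -/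
/-- The exponent function `H(ρ,σ)` from the first-moment bound. -/
noncomputable def Hfun (k1 : ℕ) (ρ σ : ℝ) : ℝ :=
  ρ * Real.log (1 / ρ) + (1 - ρ) * Real.log (1 / (1 - ρ)) +
    σ * Real.log (σ * (1 - ρ) / (σ - k1 * ρ)) -
    k1 * ρ * Real.log (k1 * (1 - ρ) / (ρ * (σ - k1 * ρ)))

/-- The exponent function `K(ρ,σ)` arising when the Chernoff parameter is `u = 1`. -/
noncomputable def Kfun (ρ σ : ℝ) : ℝ :=
  ρ * Real.log (1 / ρ) + (1 - ρ) * Real.log (1 / (1 - ρ)) +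
    σ * Real.log (1 - ρ + ρ ^ 2)

/-- `K` is the binary entropy plus the logarithmic energy term. -/
lemma Kfun_eq_binEntropy (ρ σ : ℝ) :
    Kfun ρ σ = Real.binEntropy ρ + σ * Real.log (1 - ρ + ρ ^ 2) := by
  simp [Kfun, Real.binEntropy]

lemma hasDerivAt_Kfun {x : ℝ} (h0 : 0 < x) (h1 : x < 1) (σ : ℝ) :
    HasDerivAt (fun ρ => Kfun ρ σ)
      (Real.log (1 - x) - Real.log x + σ * ((-1 + 2 * x) / (1 - x + x ^ 2))) x := by
  simp only [Kfun_eq_binEntropy]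
  have hq : HasDerivAt (fun ρ : ℝ => 1 - ρ + ρ ^ 2) (-1 + 2 * x) x := by
    refine (((hasDerivAt_id x).const_sub 1).add (hasDerivAt_pow 2 x)).congr_deriv ?_
    norm_num
  exact (Real.hasDerivAt_binEntropy h0.ne' h1.ne).add
    ((hq.log (by nlinarith)).const_mul σ)

/-- If `σ r = k (1 - r + r²)` with `1 ≤ k`, then `K(·, σ)` is decreasing on `[r, 1/2]`. -/
lemma antitoneOn_Kfun {k r σ : ℝ} (hk : 1 ≤ k) (hr0 : 0 < r)
    (h : σ * r = k * (1 - r + r ^ 2)) :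
    AntitoneOn (fun ρ => Kfun ρ σ) (Set.Icc r (1 / 2)) := by
  refine antitoneOn_of_deriv_nonpos (convex_Icc _ _) ?_ ?_ ?_
  · intro x hx
    exact (hasDerivAt_Kfun (by linarith [hx.1]) (by linarith [hx.2])
      σ).continuousAt.continuousWithinAt
  · intro x hx
    rw [interior_Icc] at hx
    exact (hasDerivAt_Kfun (by linarith [hx.1]) (by linarith [hx.2])
      σ).differentiableAt.differentiableWithinAt
  · intro x hx
    rw [interior_Icc] at hx
    obtain ⟨hrx, hx2⟩ := hx
    have hx0 : 0 < x := hr0.trans hrx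
    rw [(hasDerivAt_Kfun hx0 (by linarith) σ).deriv]
    have hq : 0 < 1 - x + x ^ 2 := by nlinarith
    have hσx : k * (1 - x + x ^ 2) ≤ σ * x := by
      refine le_of_mul_le_mul_right ?_ hr0
      have e : σ * x * r = k * (1 - r + r ^ 2) * x := by rw [← h]; ring
      have : 0 ≤ k * ((x - r) * (1 - x * r)) :=
        mul_nonneg (by linarith) (mul_nonneg (by linarith) (by nlinarith))
      linarith
    have hlog : Real.log (1 - x) - Real.log x ≤ (1 - 2 * x) / x := by
      rw [← Real.log_div (by linarith) hx0.ne']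
      refine (Real.log_le_sub_one_of_pos (div_pos (by linarith) hx0)).trans_eq ?_
      field_simp
      ring
    have hdiv : (1 - 2 * x) / x ≤ σ * ((1 - 2 * x) / (1 - x + x ^ 2)) := by
      rw [mul_div_assoc', div_le_div_iff₀ hx0 hq]
      have : 0 ≤ (1 - 2 * x) * (σ * x - (1 - x + x ^ 2)) :=
        mul_nonneg (by linarith) (by nlinarith)
      linarith
    have hneg : σ * ((-1 + 2 * x) / (1 - x + x ^ 2))
        = -(σ * ((1 - 2 * x) / (1 - x + x ^ 2))) := by ring
    linarith

/-- If `σ r = k (1 - r + r²)` with `2 ≤ k` and `0 < r ≤ 1/2`, then `K(r, σ) < 0`. -/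
lemma Kfun_neg {k r σ : ℝ} (hk : 2 ≤ k) (hr0 : 0 < r) (hr : r ≤ 1 / 2)
    (h : σ * r = k * (1 - r + r ^ 2)) : Kfun r σ < 0 := by
  rw [Kfun_eq_binEntropy]
  have hq : 3 / 4 ≤ 1 - r + r ^ 2 := by nlinarith [sq_nonneg (r - 1 / 2)]
  have hσ : 0 ≤ σ := by
    refine le_of_mul_le_mul_right ?_ hr0
    rw [h, zero_mul]
    exact mul_nonneg (by linarith) (by linarith)
  have hlog : Real.log (1 - r + r ^ 2) ≤ -(r * (1 - r)) :=
    (Real.log_le_sub_one_of_pos (by linarith)).trans_eq (by ring)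
  have hmul := mul_le_mul_of_nonneg_left hlog hσ
  have e : σ * -(r * (1 - r)) = -(k * (1 - r + r ^ 2) * (1 - r)) := by rw [← h]; ring
  have hk4 : 3 / 2 ≤ k * (1 - r + r ^ 2) := by nlinarith
  have hk5 : 3 / 4 ≤ k * (1 - r + r ^ 2) * (1 - r) := by nlinarith
  have := Real.binEntropy_le_log_two (p := r)
  linarith [Real.log_two_lt_d9]

/-- If `σ r = k (1 - r + r²)`, equivalently `k (1 - r) = r (σ - k r)`, then the functions `K`
and `H` agree at `r`. -/
lemma Kfun_eq_Hfun {k1 : ℕ} {r σ : ℝ} (hk : 0 < (k1 : ℝ)) (hr0 : 0 < r) (hr1 : r < 1)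
    (h : σ * r = k1 * (1 - r + r ^ 2)) : Kfun r σ = Hfun k1 r σ := by
  have hroot : k1 * (1 - r) = r * (σ - k1 * r) := by linear_combination -h
  have hpos : 0 < r * (σ - k1 * r) := hroot ▸ mul_pos hk (by linarith)
  have hd : 0 < σ - k1 * r := pos_of_mul_pos_right hpos hr0.le
  have harg : σ * (1 - r) / (σ - k1 * r) = 1 - r + r ^ 2 := by
    rw [div_eq_iff hd.ne']
    refine mul_left_cancel₀ hk.ne' ?_
    linear_combination σ * hroot + (σ - k1 * r) * h
  rw [Hfun, Kfun, harg, hroot, div_self hpos.ne', Real.log_one, mul_zero, sub_zero]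

/-- The number `ρ*` is a root of `k ρ² - (k + σ) ρ + k`. -/
lemma rhostar_root {k σ : ℝ} (hk : 0 < k) (hσ : k < σ) :
    σ * (2 * k / (k + σ + Real.sqrt ((σ - k) * (σ + 3 * k)))) =
      k * (1 - 2 * k / (k + σ + Real.sqrt ((σ - k) * (σ + 3 * k))) +
        (2 * k / (k + σ + Real.sqrt ((σ - k) * (σ + 3 * k)))) ^ 2) := by
  have hs := Real.sq_sqrt (show 0 ≤ (σ - k) * (σ + 3 * k) from
    mul_nonneg (by linarith) (by linarith))
  have hs0 := Real.sqrt_nonneg ((σ - k) * (σ + 3 * k))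
  set s := Real.sqrt ((σ - k) * (σ + 3 * k))
  have hD : k + σ + s ≠ 0 := by linarith
  field_simp
  linear_combination -hs

lemma rhostar_lt_half {k σ : ℝ} (hk : 0 < k) (hσ : 3 / 2 * k < σ) :
    2 * k / (k + σ + Real.sqrt ((σ - k) * (σ + 3 * k))) < 1 / 2 := by
  have hs : 3 / 2 * k < Real.sqrt ((σ - k) * (σ + 3 * k)) :=
    Real.lt_sqrt_of_sq_lt (by nlinarith)
  rw [div_lt_div_iff₀ (by linarith) two_pos]
  linarith

theorem Kfun_le_at_rhostar (k1 : ℕ) (hk1 : 2 ≤ k1) (σ : ℝ) (hσ : 3 / 2 * k1 < σ) :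
    2 * (k1 : ℝ) / (k1 + σ + Real.sqrt ((σ - k1) * (σ + 3 * k1))) < 1 / 2 ∧
    ∀ ρ : ℝ,
      ρ ∈ Set.Icc (2 * (k1 : ℝ) / (k1 + σ + Real.sqrt ((σ - k1) * (σ + 3 * k1)))) (1 / 2) →
      Kfun ρ σ ≤
          Kfun (2 * (k1 : ℝ) / (k1 + σ + Real.sqrt ((σ - k1) * (σ + 3 * k1)))) σ ∧
        Kfun (2 * (k1 : ℝ) / (k1 + σ + Real.sqrt ((σ - k1) * (σ + 3 * k1)))) σ =
          Hfun k1 (2 * (k1 : ℝ) / (k1 + σ + Real.sqrt ((σ - k1) * (σ + 3 * k1)))) σ ∧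
        Hfun k1 (2 * (k1 : ℝ) / (k1 + σ + Real.sqrt ((σ - k1) * (σ + 3 * k1)))) σ < 0 := by
  have hk : (2 : ℝ) ≤ k1 := by exact_mod_cast hk1
  have hlt := rhostar_lt_half (by linarith) hσ
  have hroot := rhostar_root (k := k1) (σ := σ) (by linarith) (by linarith)
  have hpos : 0 < 2 * (k1 : ℝ) / (k1 + σ + Real.sqrt ((σ - k1) * (σ + 3 * k1))) := by
    have := Real.sqrt_nonneg ((σ - k1) * (σ + 3 * k1))
    exact div_pos (by linarith) (by linarith)
  have heq := Kfun_eq_Hfun (by linarith) hpos (by linarith) hroot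
  refine ⟨hlt, fun ρ hρ => ⟨?_, heq, heq ▸ Kfun_neg hk hpos hlt.le hroot⟩⟩
  exact antitoneOn_Kfun (by linarith) hpos hroot ⟨le_rfl, hlt.le⟩ hρ hρ.1
end
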